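/- Under the standing assumptions, if L_0 ≤ 4κ, then L_ℓ ≤ 4κ·(2 + log₂ D) for all ℓ ∈ ℕ (Main Theorem: local skew bound in the absence of faults). -/

import Mathlib

/-!
Subtracting the nominal progress `Λ * ℓ` from the pulse times of layer `ℓ` leaves values for which
the corrections can be eliminated: one layer is related to the next by `LayerStep`.

Suppose `Ψ^s ≤ Q` fails for the first time on layer `L`, at a pair `(v, w)`, and follow both ends
back in time. The lagging end `w` loses at most `κ / 2` per layer, where moving one edge away from
`v` is paid for by `4 * s * κ`, and it never gets to `v`, because a node at least as late as `v` was
on layer `L` stays tethered to it. The leading end gains `κ` per layer, at the exchange rate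
`(4 * s - 2) * κ` per edge. After `k` layers this pair violates `Ξ^s ≤ Q + κ / 2 * k`.
As `Ξ^(s+1) ≤ Ψ^s`, taking `k ≈ Ψ^s / κ` shows that each level roughly halves the potential:
`Ψ^(n+1) ≤ κ * (2 * (D / 2 ^ n) + 1)`, which for `n = ⌊log₂ D⌋` is the claim.
-/

section GraphDistance

variable {V : Type*} {G : SimpleGraph V}

lemma dist_le_dist_add_one_of_adj {v w : V} (h : G.Adj v w) (u : V) :
    G.dist u w ≤ G.dist u v + 1 := by
  have := h.diff_dist_adj (u := u)
  lia

lemma exists_adj_dist_lt {v q : V} (h : G.Reachable v q) (hne : v ≠ q) :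
    ∃ y, G.Adj v y ∧ G.dist q y < G.dist q v := by
  obtain ⟨p, hp⟩ := h.exists_walk_length_eq_dist
  cases p with
  | nil => exact absurd rfl hne
  | @cons _ y _ hadj tail =>
    refine ⟨y, hadj, ?_⟩
    rw [G.dist_comm (v := y), G.dist_comm (v := v), ← hp]
    exact Nat.lt_succ_of_le (SimpleGraph.dist_le tail)

lemma sub_le_mul_walk_length {f : V → ℝ} {a : ℝ} (h : ∀ v w, G.Adj v w → f v - f w ≤ a) {v w : V}
    (p : G.Walk v w) : f v - f w ≤ a * p.length := by
  induction p with
  | nil => simp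
  | cons hadj _ ih =>
    have := h _ _ hadj
    rw [SimpleGraph.Walk.length_cons]
    push_cast
    linarith

end GraphDistance

section Logarithm

lemma two_rpow_le_one_add {x : ℝ} (h₀ : 0 ≤ x) (h₁ : x ≤ 1) : (2 : ℝ) ^ x ≤ 1 + x := by
  have := rpow_one_add_le_one_add_mul_self (s := 1) (by norm_num) h₀ h₁
  rwa [one_add_one_eq_two, mul_one] at this

lemma div_two_pow_floor_logb_le {x : ℝ} (hx : 1 ≤ x) :
    x / 2 ^ ⌊Real.logb 2 x⌋₊ ≤ 1 + (Real.logb 2 x - ⌊Real.logb 2 x⌋₊) := by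
  have hfloor := Nat.floor_le (Real.logb_nonneg one_lt_two hx)
  have hlt := Nat.lt_floor_add_one (Real.logb 2 x)
  calc x / 2 ^ ⌊Real.logb 2 x⌋₊
      = 2 ^ (Real.logb 2 x - ⌊Real.logb 2 x⌋₊) := by
        rw [Real.rpow_sub two_pos, Real.rpow_natCast,
          Real.rpow_logb two_pos (by norm_num) (by linarith)]
    _ ≤ 1 + (Real.logb 2 x - ⌊Real.logb 2 x⌋₊) :=
        two_rpow_le_one_add (by linarith) (by linarith)

end Logarithm

section SkewBounds

variable {V : Type*} {G : SimpleGraph V} {κ : ℝ}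

/-- The values `f` are bounded across the graph by slope `a` and offset `Q`. For the values of layer
`ℓ` this says `Ψ^s(ℓ) ≤ Q` if `a = 4 * s * κ`, and `Ξ^s(ℓ) ≤ Q` if `a = (4 * s - 2) * κ`. -/
def SkewBound (G : SimpleGraph V) (a Q : ℝ) (f : V → ℝ) : Prop :=
  ∀ v w, f v - f w ≤ a * G.dist v w + Q

lemma SkewBound.mono {a b P Q : ℝ} {f : V → ℝ} (h : SkewBound G a P f) (hab : a ≤ b)
    (hPQ : P ≤ Q) : SkewBound G b Q f := by
  intro v w
  have := h v w
  have := mul_le_mul_of_nonneg_right hab (Nat.cast_nonneg (α := ℝ) (G.dist v w))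
  linarith

lemma skewBound_of_forall_adj (hG : G.Connected) {f : V → ℝ} {a : ℝ}
    (h : ∀ v w, G.Adj v w → f v - f w ≤ a) : SkewBound G a 0 f := by
  intro v w
  obtain ⟨p, hp⟩ := hG.exists_walk_length_eq_dist v w
  rw [add_zero, ← hp]
  exact sub_le_mul_walk_length h p

/-- How the drift-normalised pulse times `g` of one layer arise from those `f` of the previous
layer, with the corrections eliminated: `fast` and `slow` come from FC and SC, while `delay` and
`advance` are the two halves of JC. The uncertainty of the drift accounts for each `κ / 2`. -/
structure LayerStep (G : SimpleGraph V) (κ : ℝ) (f g : V → ℝ) : Prop where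
  fast (s : ℕ) (hs : 1 ≤ s) (v : V) :
    (∃ x, G.Adj v x ∧ g v ≤ f x - (4 * s - 1) * κ) ∨
    (∀ x, G.Adj v x → g v ≤ f x + (4 * s - 3) * κ) ∨
    g v ≤ f v - κ
  slow (s : ℕ) (v : V) :
    (∀ x, G.Adj v x → f x ≤ g v + κ / 2 + 4 * s * κ) ∨
    (∃ x, G.Adj v x ∧ f x ≤ g v + κ / 2 - 4 * s * κ) ∨
    f v ≤ g v + κ / 2
  delay (v : V) : g v ≤ f v ∨ ∀ x, G.Adj v x → g v + κ ≤ f x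
  advance (v : V) : f v ≤ g v + 3 * κ / 2 ∨ ∀ x, G.Adj v x → f x + κ / 2 ≤ g v

lemma layerStep_of_corrections {f g c : V → ℝ} {ϑ : ℝ} (hκ : 0 < κ) (hϑ : 0 < ϑ)
    (hupper : ∀ v, g v ≤ f v - c v)
    (hlower : ∀ v, f v - κ / 2 - c v / ϑ ≤ g v)
    (hSC : ∀ (s : ℕ) (v : V),
      (∀ w, G.Adj v w → c v / ϑ ≤ f v - f w + 4 * s * κ) ∨
      (∃ w, G.Adj v w ∧ c v / ϑ ≤ f v - f w - 4 * s * κ) ∨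
      c v ≤ 0)
    (hFC : ∀ s : ℕ, 1 ≤ s → ∀ v : V,
      (∃ w, G.Adj v w ∧ f v - f w + (4 * s - 2) * κ + κ ≤ c v) ∨
      (∀ w, G.Adj v w → f v - f w - (4 * s - 2) * κ + κ ≤ c v) ∨
      κ ≤ c v)
    (hJC : ∀ v : V,
      (κ < c v / ϑ ∧ ∀ w, G.Adj v w → c v / ϑ ≤ f v - f w - κ) ∨
      (c v < 0 ∧ ∀ w, G.Adj v w → f v - f w + κ ≤ c v) ∨
      (0 ≤ c v / ϑ ∧ c v / ϑ ≤ κ)) :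
    LayerStep G κ f g where
  fast s hs v := by
    have := hupper v
    refine (hFC s hs v).imp ?_ (Or.imp ?_ ?_)
    · rintro ⟨x, hx, h⟩
      exact ⟨x, hx, by linarith⟩
    · intro h x hx
      linarith [h x hx]
    · intro h
      linarith
  slow s v := by
    have := hlower v
    refine (hSC s v).imp ?_ (Or.imp ?_ ?_)
    · intro h x hx
      linarith [h x hx]
    · rintro ⟨x, hx, h⟩
      exact ⟨x, hx, by linarith⟩
    · intro h
      linarith [div_nonpos_of_nonpos_of_nonneg h hϑ.le]
  delay v := by
    have := hupper v
    have hnonneg : 0 ≤ c v / ϑ → 0 ≤ c v := by simp only [le_div_iff₀ hϑ, zero_mul, imp_self]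
    rcases hJC v with ⟨h, -⟩ | ⟨-, h⟩ | ⟨h, -⟩
    · left
      linarith [hnonneg (hκ.trans h).le]
    · right
      intro x hx
      linarith [h x hx]
    · left
      linarith [hnonneg h]
  advance v := by
    have := hlower v
    rcases hJC v with ⟨-, h⟩ | ⟨h, -⟩ | ⟨-, h⟩
    · right
      intro x hx
      linarith [h x hx]
    · left
      linarith [div_neg_of_neg_of_pos h hϑ]
    · left
      linarith

/-- `q` is within distance `n` of `v`, and late nodes (with values at least `S`) prevent `q` from
falling back onto `v`. Normally one late node lies on a route of length `n` from `v` to `q`. If that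
node and `q` are adjacent and swap their roles, the route is lost, but from then on all neighbours
of the lagging node are late, and it can only swing back and forth across the edge `q z`. -/
inductive Tethered (G : SimpleGraph V) (κ : ℝ) (f : V → ℝ) (S : ℝ) (v q : V) (n : ℕ) : Prop
  | onRoute (z : V) (hdist : G.dist v z + G.dist z q ≤ n) (hz : S ≤ f z)
  | surrounded (z : V) (hadj : G.Adj q z) (hq : G.dist v q ≤ n) (hz : G.dist v z ≤ n)
      (hlate : ∀ y, G.Adj q y → S + κ ≤ f y)

namespace Tethered

variable {f : V → ℝ} {S : ℝ} {v q : V} {n : ℕ}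

lemma dist_le (h : Tethered G κ f S v q n) (hG : G.Connected) : G.dist v q ≤ n := by
  cases h with
  | onRoute z hdist => exact hG.dist_triangle.trans hdist
  | surrounded z _ hq => exact hq

lemma exists_late (h : Tethered G κ f S v q n) (hG : G.Connected) (hκ : 0 < κ) :
    ∃ z, G.dist z q ≤ n ∧ S ≤ f z := by
  cases h with
  | onRoute z hdist hz => exact ⟨z, by lia, hz⟩
  | surrounded z hadj hq hz hlate =>
    have hpos : 0 < n := by
      by_contra! hn
      have hvq : v = q := hG.dist_eq_zero_iff.1 (by lia)
      have hvz : v = z := hG.dist_eq_zero_iff.1 (by lia)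
      exact hadj.ne (hvq ▸ hvz)
    refine ⟨z, ?_, by linarith [hlate z hadj]⟩
    rwa [SimpleGraph.dist_eq_one_iff_adj.2 hadj.symm]

lemma ne_of_skewBound {a Q : ℝ} (h : Tethered G κ f S v q n) (hG : G.Connected) (hκ : 0 < κ)
    (ha : κ / 2 ≤ a) (hf : SkewBound G a Q f) (hq : f q < S)
    (hn : f q + a * n + Q < S + κ / 2) : v ≠ q := by
  rintro rfl
  have ha₀ : 0 ≤ a := by linarith
  cases h with
  | onRoute z hdist hz =>
    have hvz : 0 < G.dist v z := hG.pos_dist_of_ne <| by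
      rintro rfl
      exact hz.not_gt hq
    have hzv : (G.dist z v : ℝ) + 1 ≤ n := by exact_mod_cast (by lia : G.dist z v + 1 ≤ n)
    have := mul_le_mul_of_nonneg_left hzv ha₀
    linarith [hf z v]
  | surrounded z hadj _ hz hlate =>
    rw [SimpleGraph.dist_eq_one_iff_adj.2 hadj] at hz
    have hbound := hf z v
    rw [SimpleGraph.dist_eq_one_iff_adj.2 hadj.symm] at hbound
    have := mul_le_mul_of_nonneg_left (Nat.cast_le (α := ℝ).2 hz) ha₀
    linarith [hlate z hadj]

/-- On the first layer of the backward trace, this excludes the second alternative of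
`LayerStep.fast` for the leading node. -/
lemma not_forall_adj_le {s : ℕ} {Q : ℝ} (h : Tethered G κ f S v q n) (hG : G.Connected)
    (hκ : 0 < κ) (hs : 1 ≤ s) (hf : SkewBound G (4 * s * κ) Q f) (hq : f q < S)
    (hn : f q + 4 * s * κ * n + Q < S + κ / 2) :
    ¬ ∀ y, G.Adj v y → S ≤ f y + (4 * s - 3) * κ := by
  intro hall
  have hs' : κ ≤ s * κ := le_mul_of_one_le_left hκ.le (by exact_mod_cast hs)
  have hne : v ≠ q := h.ne_of_skewBound hG hκ (by linarith) hf hq hn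
  obtain ⟨y, hy, hyq⟩ := exists_adj_dist_lt (hG.preconnected v q) hne
  have hdist : (G.dist y q : ℝ) + 1 ≤ n := by
    have := h.dist_le hG
    rw [G.dist_comm (v := y), G.dist_comm (v := v)] at hyq
    exact_mod_cast hyq.trans_le this
  have := mul_le_mul_of_nonneg_left hdist (by positivity : 0 ≤ 4 * s * κ)
  linarith [hf y q, hall y hy]

end Tethered

namespace LayerStep

variable {f g : V → ℝ} {S : ℝ} {v q : V} {n : ℕ}

lemma exists_tethered_of_late (h : LayerStep G κ f g) (hG : G.Connected) (s : ℕ) {z : V}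
    (hzq : z ≠ q) (hdist : G.dist v z + G.dist z q ≤ n) (hz : S ≤ f z) :
    ∃ q' n', Tethered G κ f S v q' n' ∧ f q' + 4 * s * κ * n' ≤ g q + 4 * s * κ * n + κ / 2 := by
  rcases h.slow s q with hall | ⟨x, hx, hfx⟩ | hstay
  · obtain ⟨y, hy, hyz⟩ := exists_adj_dist_lt (hG.preconnected q z) hzq.symm
    obtain ⟨m, rfl⟩ : ∃ m, n = m + 1 := ⟨n - 1, by lia⟩
    refine ⟨y, m, .onRoute z (by lia) hz, ?_⟩
    push_cast
    linarith [hall y hy]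
  · have := dist_le_dist_add_one_of_adj hx z
    refine ⟨x, n + 1, .onRoute z (by lia) hz, ?_⟩
    push_cast
    linarith
  · exact ⟨q, n, .onRoute z hdist hz, by linarith⟩

lemma exists_tethered_of_onRoute (h : LayerStep G κ f g) (hG : G.Connected) (hκ : 0 < κ) (s : ℕ)
    {z : V} (hdist : G.dist v z + G.dist z q ≤ n) (hz : S ≤ g z) (hq : g q + κ / 2 < S) :
    ∃ q' n', Tethered G κ f S v q' n' ∧ f q' + 4 * s * κ * n' ≤ g q + 4 * s * κ * n + κ / 2 := by
  have hzq : z ≠ q := by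
    rintro rfl
    linarith
  rcases h.delay z with hstay | hdelay
  · exact h.exists_tethered_of_late hG s hzq hdist (hz.trans hstay)
  obtain ⟨y, hzy, hyq⟩ := exists_adj_dist_lt (hG.preconnected z q) hzq
  have hvy : G.dist v y + G.dist y q ≤ n := by
    have := dist_le_dist_add_one_of_adj hzy v
    rw [G.dist_comm (v := y), G.dist_comm (v := z)] at hyq
    lia
  have hy := hdelay y hzy
  rcases eq_or_ne y q with rfl | hne
  · rcases h.advance y with hslow | hfast
    · linarith
    · refine ⟨z, n, .surrounded y hzy (by lia) (by lia) fun x hx ↦ ?_, ?_⟩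
      · linarith [hdelay x hx]
      · linarith [hfast z hzy.symm]
  · exact h.exists_tethered_of_late hG s hne hvy (by linarith)

lemma exists_tethered_of_surrounded (h : LayerStep G κ f g) (hκ : 0 < κ) {z : V}
    (hqz : G.Adj q z) (hvq : G.dist v q ≤ n) (hvz : G.dist v z ≤ n)
    (hlate : ∀ y, G.Adj q y → S + κ ≤ g y) (hq : g q + κ / 2 < S) :
    ∃ q', Tethered G κ f S v q' n ∧ f q' ≤ g q + κ / 2 := by
  rcases h.advance q with hslow | hfast
  · have hlate' : ∀ y, G.Adj q y → S + κ ≤ f y := by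
      intro y hy
      rcases h.delay y with hstay | hdelay
      · exact (hlate y hy).trans hstay
      · linarith [hlate y hy, hdelay q hy.symm]
    refine ⟨q, .surrounded z hqz hvq hvz hlate', ?_⟩
    have hslow₀ := h.slow 0 q
    simp only [Nat.cast_zero, mul_zero, zero_mul, add_zero, sub_zero] at hslow₀
    rcases hslow₀ with hall | ⟨x, hx, hfx⟩ | hstay
    · linarith [hall z hqz, hlate' z hqz]
    · linarith [hlate' x hx]
    · exact hstay
  · refine ⟨z, .surrounded q hqz.symm hvz hvq fun y hy ↦ ?_, by linarith [hfast z hqz]⟩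
    rcases h.delay z with hstay | hdelay
    · linarith [hlate z hqz, hfast z hqz]
    · linarith [hlate z hqz, hdelay y hy]

lemma exists_tethered (h : LayerStep G κ f g) (hG : G.Connected) (hκ : 0 < κ) (s : ℕ)
    (ht : Tethered G κ g S v q n) (hq : g q + κ / 2 < S) :
    ∃ q' n', Tethered G κ f S v q' n' ∧ f q' + 4 * s * κ * n' ≤ g q + 4 * s * κ * n + κ / 2 := by
  cases ht with
  | onRoute z hdist hz => exact h.exists_tethered_of_onRoute hG hκ s hdist hz hq
  | surrounded z hqz hvq hvz hlate =>
    obtain ⟨q', ht', hq'⟩ := h.exists_tethered_of_surrounded hκ hqz hvq hvz hlate hq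
    exact ⟨q', n, ht', by linarith⟩

lemma exists_lead (h : LayerStep G κ f g) (hG : G.Connected) (hκ : 0 < κ) {s : ℕ} (hs : 1 ≤ s)
    {R : ℝ} {x : V} (hx : R + (4 * s - 2) * κ * G.dist v x ≤ g x)
    (hv : x = v → ¬ ∀ y, G.Adj v y → g v ≤ f y + (4 * s - 3) * κ) :
    ∃ y, R + κ + (4 * s - 2) * κ * G.dist v y ≤ f y := by
  have hs' : (1 : ℝ) ≤ s := by exact_mod_cast hs
  have hslope : 0 ≤ (4 * s - 2) * κ := mul_nonneg (by linarith) hκ.le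
  rcases h.fast s hs x with ⟨y, hy, hgx⟩ | hall | hstay
  · have hdist : (G.dist v y : ℝ) ≤ G.dist v x + 1 := by
      exact_mod_cast dist_le_dist_add_one_of_adj hy v
    have := mul_le_mul_of_nonneg_left hdist hslope
    exact ⟨y, by linarith⟩
  · have hne : x ≠ v := by
      rintro rfl
      exact hv rfl hall
    obtain ⟨y, hy, hyv⟩ := exists_adj_dist_lt (hG.preconnected x v) hne
    have hdist : (G.dist v y : ℝ) + 1 ≤ G.dist v x := by exact_mod_cast hyv
    have := mul_le_mul_of_nonneg_left hdist hslope
    exact ⟨y, by linarith [hall y hy]⟩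
  · exact ⟨x, by linarith⟩

end LayerStep

section Layers

variable {τ : ℕ → V → ℝ} {s L : ℕ} {Q : ℝ} {v w : V}

lemma exists_trailing_trace (hG : G.Connected) (hκ : 0 < κ)
    (hτ : ∀ ℓ, LayerStep G κ (τ ℓ) (τ (ℓ + 1)))
    (hvw : τ L w + 4 * s * κ * G.dist v w + Q < τ L v)
    {j ℓ : ℕ} (hℓ : ℓ + j = L) (hj : κ / 2 * j ≤ Q) :
    ∃ q n, Tethered G κ (τ ℓ) (τ L v) v q n ∧
      τ ℓ q + 4 * s * κ * n ≤ τ L w + 4 * s * κ * G.dist v w + κ / 2 * j := by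
  induction j generalizing ℓ with
  | zero =>
    obtain rfl : ℓ = L := hℓ
    exact ⟨w, G.dist v w, .onRoute v (by simp) le_rfl, by simp⟩
  | succ j ih =>
    push_cast at hj ⊢
    obtain ⟨q, n, ht, hq⟩ := ih (ℓ := ℓ + 1) (by lia) (by linarith)
    have hn : 0 ≤ 4 * s * κ * n := by positivity
    obtain ⟨q', n', ht', hq'⟩ := (hτ ℓ).exists_tethered hG hκ s ht (by linarith)
    exact ⟨q', n', ht', by linarith⟩

lemma exists_leading_trace (hG : G.Connected) (hκ : 0 < κ)
    (hτ : ∀ ℓ, LayerStep G κ (τ ℓ) (τ (ℓ + 1))) (hs : 1 ≤ s)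
    (hlt : ∀ ℓ < L, SkewBound G (4 * s * κ) Q (τ ℓ))
    (hvw : τ L w + 4 * s * κ * G.dist v w + Q < τ L v)
    {j ℓ : ℕ} (hℓ : ℓ + j = L) (hj : κ / 2 * j ≤ Q) :
    ∃ x, τ L v + κ * j + (4 * s - 2) * κ * G.dist v x ≤ τ ℓ x := by
  induction j generalizing ℓ with
  | zero =>
    obtain rfl : ℓ = L := hℓ
    exact ⟨v, by simp⟩
  | succ j ih =>
    push_cast at hj ⊢
    obtain ⟨x, hx⟩ := ih (ℓ := ℓ + 1) (by lia) (by linarith)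
    suffices hv : x = v → ¬ ∀ y, G.Adj v y → τ (ℓ + 1) v ≤ τ ℓ y + (4 * s - 3) * κ by
      obtain ⟨y, hy⟩ := (hτ ℓ).exists_lead hG hκ hs hx hv
      exact ⟨y, by linarith⟩
    rintro rfl
    rcases Nat.eq_zero_or_pos j with rfl | hjpos
    · obtain rfl : ℓ + 1 = L := hℓ
      obtain ⟨q, n, ht, hq⟩ := exists_trailing_trace (j := 1) hG hκ hτ hvw rfl (by simpa using hj)
      have hn : 0 ≤ 4 * s * κ * n := by positivity
      push_cast at hq
      exact ht.not_forall_adj_le hG hκ hs (hlt ℓ (by lia)) (by linarith) (by linarith)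
    · obtain ⟨q, n, ht, hq⟩ := exists_trailing_trace (j := j) (ℓ := ℓ + 1) hG hκ hτ hvw (by lia)
        (by linarith)
      have hdist : (G.dist x q : ℝ) ≤ n := by exact_mod_cast ht.dist_le hG
      have := mul_le_mul_of_nonneg_left hdist (by positivity : 0 ≤ 4 * s * κ)
      rw [G.dist_self, Nat.cast_zero, mul_zero] at hx
      have : 0 ≤ κ * j := by positivity
      linarith [hlt (ℓ + 1) (by lia) x q]

lemma skewBound_of_refined (hG : G.Connected) (hκ : 0 < κ)
    (hτ : ∀ ℓ, LayerStep G κ (τ ℓ) (τ (ℓ + 1))) (h₀ : SkewBound G (4 * κ) 0 (τ 0))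
    (hs : 1 ≤ s) {k : ℕ} (hk : 1 ≤ k) (hkQ : κ / 2 * k ≤ Q)
    (hΞ : ∀ ℓ, SkewBound G (4 * s * κ) Q (τ ℓ) →
      SkewBound G ((4 * s - 2) * κ) (Q + κ / 2 * k) (τ ℓ)) (ℓ : ℕ) :
    SkewBound G (4 * s * κ) Q (τ ℓ) := by
  have hs' : (1 : ℝ) ≤ s := by exact_mod_cast hs
  have hslope : 0 ≤ (4 * s - 2) * κ := mul_nonneg (by linarith) hκ.le
  induction ℓ using Nat.strong_induction_on with
  | _ L hlt =>
  intro v w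
  by_contra! hcon
  have hvw : τ L w + 4 * s * κ * G.dist v w + Q < τ L v := by linarith
  rcases Nat.lt_or_ge L k with hLk | hkL
  · have hLQ : κ / 2 * L ≤ κ / 2 * k := by gcongr
    obtain ⟨q, n, ht, hq⟩ := exists_trailing_trace hG hκ hτ hvw (zero_add L) (by linarith)
    obtain ⟨z, hzq, hz⟩ := ht.exists_late hG hκ
    have : 4 * κ * G.dist z q ≤ 4 * s * κ * n := by
      gcongr
      linarith
    linarith [h₀ z q]
  · obtain ⟨ℓ, rfl⟩ := Nat.exists_eq_add_of_le' hkL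
    obtain ⟨q, n, ht, hq⟩ := exists_trailing_trace hG hκ hτ hvw rfl hkQ
    obtain ⟨x, hx⟩ := exists_leading_trace hG hκ hτ hs hlt hvw rfl hkQ
    have hdist : (G.dist x q : ℝ) ≤ G.dist v x + n := by
      rw [G.dist_comm (u := v)]
      exact_mod_cast hG.dist_triangle.trans (Nat.add_le_add_left (ht.dist_le hG) _)
    have := mul_le_mul_of_nonneg_left hdist hslope
    have : 0 ≤ κ * n := by positivity
    linarith [hΞ ℓ (hlt ℓ (by lia)) x q]

lemma skewBound_level (hG : G.Connected) (hκ : 0 < κ)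
    (hτ : ∀ ℓ, LayerStep G κ (τ ℓ) (τ (ℓ + 1))) (h₀ : SkewBound G (4 * κ) 0 (τ 0))
    {D : ℕ} (hD : 1 ≤ D) (hdiam : ∀ v w, G.dist v w ≤ D) (n ℓ : ℕ) :
    SkewBound G (4 * (n + 1 : ℕ) * κ) (κ * (2 * (D / 2 ^ n) + 1)) (τ ℓ) := by
  induction n generalizing ℓ with
  | zero =>
    refine SkewBound.mono (P := 2 * κ * D) ?_ le_rfl (by rw [pow_zero]; linarith)
    refine skewBound_of_refined (k := 4 * D) hG hκ hτ h₀ le_rfl (by lia)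
      (by push_cast; linarith) (fun ℓ' hΨ v w ↦ ?_) ℓ
    have hdist : κ * G.dist v w ≤ κ * D := by
      gcongr
      exact hdiam v w
    have hvw := hΨ v w
    push_cast at hvw ⊢
    linarith
  | succ n ih =>
    set P : ℝ := 2 * (D / 2 ^ n) + 1 with hP
    have hP₀ : 0 < P := by positivity
    have hceil := mul_le_mul_of_nonneg_left (Nat.le_ceil P) hκ.le
    have hceil' := mul_le_mul_of_nonneg_left (Nat.ceil_lt_add_one hP₀.le).le hκ.le
    have hhalf : κ * (2 * (D / 2 ^ (n + 1)) + 1) = κ / 2 * (P + 1) := by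
      rw [hP, pow_succ]
      ring
    rw [hhalf]
    refine skewBound_of_refined hG hκ hτ h₀ (by lia) (Nat.ceil_pos.2 hP₀) (by linarith)
      (fun ℓ' _ ↦ (ih ℓ').mono ?_ (by linarith)) ℓ
    push_cast
    linarith

lemma sub_le_of_adj (hG : G.Connected) (hκ : 0 < κ)
    (hτ : ∀ ℓ, LayerStep G κ (τ ℓ) (τ (ℓ + 1))) (h₀ : SkewBound G (4 * κ) 0 (τ 0))
    {D : ℕ} (hdiam : ∀ v w, G.dist v w ≤ D) (ℓ : ℕ) (hvw : G.Adj v w) :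
    τ ℓ v - τ ℓ w ≤ 4 * κ * (2 + Real.logb 2 D) := by
  have hdist : G.dist v w = 1 := SimpleGraph.dist_eq_one_iff_adj.2 hvw
  have hD : 1 ≤ D := hdist ▸ hdiam v w
  have hD' : (1 : ℝ) ≤ D := by exact_mod_cast hD
  have hfloor := Nat.floor_le (Real.logb_nonneg one_lt_two hD')
  have hdiv := div_two_pow_floor_logb_le hD'
  set n := ⌊Real.logb 2 D⌋₊
  have hlevel := skewBound_level hG hκ hτ h₀ hD hdiam n ℓ v w
  rw [hdist] at hlevel
  push_cast at hlevel
  calc τ ℓ v - τ ℓ w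
      ≤ κ * (4 * n + 5 + 2 * (D / 2 ^ n)) := by linarith
    _ ≤ κ * (4 * (2 + Real.logb 2 D)) := by
        gcongr
        linarith
    _ = 4 * κ * (2 + Real.logb 2 D) := by ring

end Layers

end SkewBounds

theorem stmt12_general
    {ϑ u d Λ κ : ℝ} (hϑ : 0 < ϑ) (hκ₀ : 0 < κ)
    (hκ : κ = 2 * (u + (1 - 1 / ϑ) * (Λ - d)))
    {V : Type*} {G : SimpleGraph V} (hconn : G.Connected)
    {D : ℕ} (hdiam : ∀ v w : V, G.dist v w ≤ D)
    {t C : V → ℕ → ℝ}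
    (hDRIFT : ∀ (v : V) (ℓ : ℕ),
      d - u + (Λ - d - C v (ℓ + 1)) / ϑ ≤ t v (ℓ + 1) - t v ℓ ∧
      t v (ℓ + 1) - t v ℓ ≤ Λ - C v (ℓ + 1))
    (hSC : ∀ (s : ℕ) (v : V) (ℓ : ℕ),
      (∀ w : V, G.Adj v w → C v (ℓ + 1) / ϑ ≤ t v ℓ - t w ℓ + 4 * (s : ℝ) * κ) ∨
      (∃ w : V, G.Adj v w ∧ C v (ℓ + 1) / ϑ ≤ t v ℓ - t w ℓ - 4 * (s : ℝ) * κ) ∨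
      C v (ℓ + 1) ≤ 0)
    (hFC : ∀ (s : ℕ), 1 ≤ s → ∀ (v : V) (ℓ : ℕ),
      (∃ w : V, G.Adj v w ∧ t v ℓ - t w ℓ + (4 * (s : ℝ) - 2) * κ + κ ≤ C v (ℓ + 1)) ∨
      (∀ w : V, G.Adj v w → t v ℓ - t w ℓ - (4 * (s : ℝ) - 2) * κ + κ ≤ C v (ℓ + 1)) ∨
      κ ≤ C v (ℓ + 1))
    (hJC : ∀ (v : V) (ℓ : ℕ),
      (κ < C v (ℓ + 1) / ϑ ∧ ∀ w : V, G.Adj v w → C v (ℓ + 1) / ϑ ≤ t v ℓ - t w ℓ - κ) ∨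
      (C v (ℓ + 1) < 0 ∧ ∀ w : V, G.Adj v w → t v ℓ - t w ℓ + κ ≤ C v (ℓ + 1)) ∨
      (0 ≤ C v (ℓ + 1) / ϑ ∧ C v (ℓ + 1) / ϑ ≤ κ))
    (hL0 : ∀ v w : V, G.Adj v w → |t v 0 - t w 0| ≤ 4 * κ)
    (ℓ : ℕ) (v w : V) (hvw : G.Adj v w) :
    |t v ℓ - t w ℓ| ≤ 4 * κ * (2 + Real.logb 2 D) := by
  let τ (ℓ : ℕ) (v : V) : ℝ := t v ℓ - Λ * ℓ
  have hτ_sub (ℓ : ℕ) (v w : V) : τ ℓ v - τ ℓ w = t v ℓ - t w ℓ := sub_sub_sub_cancel_right ..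
  have hτ (ℓ : ℕ) : LayerStep G κ (τ ℓ) (τ (ℓ + 1)) := by
    refine layerStep_of_corrections (c := fun v ↦ C v (ℓ + 1)) hκ₀ hϑ ?_ ?_ ?_ ?_ ?_
    · intro v
      simp only [τ]
      push_cast
      linarith [(hDRIFT v ℓ).2]
    · intro v
      have hdrift := (hDRIFT v ℓ).1
      rw [sub_div, div_eq_mul_one_div (Λ - d)] at hdrift
      simp only [τ]
      push_cast
      linarith
    · simpa only [hτ_sub] using fun s v ↦ hSC s v ℓ
    · simpa only [hτ_sub] using fun s hs v ↦ hFC s hs v ℓ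
    · simpa only [hτ_sub] using fun v ↦ hJC v ℓ
  have h₀ : SkewBound G (4 * κ) 0 (τ 0) := skewBound_of_forall_adj hconn fun v w hadj ↦ by
    rw [hτ_sub]
    exact (le_abs_self _).trans (hL0 v w hadj)
  rw [abs_sub_le_iff, ← hτ_sub, ← hτ_sub]
  exact ⟨sub_le_of_adj hconn hκ₀ hτ h₀ hdiam ℓ hvw,
    sub_le_of_adj hconn hκ₀ hτ h₀ hdiam ℓ hvw.symm⟩

/-- The `tmax`/`tmin` over neighbours in the SC/FC/JC conditions are expressed
pointwise over the (nonempty) neighbourhood, which is equivalent. -/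
theorem stmt12
    (ϑ u d Λ κ : ℝ)
    (hϑ : 1 < ϑ) (hu : 0 ≤ u) (hd : u ≤ d) (hΛ : d < Λ)
    (hκ : κ = 2 * (u + (1 - 1/ϑ) * (Λ - d)))
    {V : Type*} [Fintype V] [Nonempty V]
    (G : SimpleGraph V) [DecidableRel G.Adj]
    (hconn : G.Connected) (hdeg : ∀ v : V, 2 ≤ G.degree v)
    (D : ℕ) (hD : 1 ≤ D) (hdiam : ∀ v w : V, G.dist v w ≤ D)
    (t : V → ℕ → ℝ) (C : V → ℕ → ℝ)
    (hDRIFT : ∀ (v : V) (ℓ : ℕ),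
      d - u + (Λ - d - C v (ℓ+1)) / ϑ ≤ t v (ℓ+1) - t v ℓ ∧
      t v (ℓ+1) - t v ℓ ≤ Λ - C v (ℓ+1))
    (hSC : ∀ (s : ℕ) (v : V) (ℓ : ℕ),
      (∀ w : V, G.Adj v w → C v (ℓ+1) / ϑ ≤ t v ℓ - t w ℓ + 4*(s:ℝ)*κ) ∨
      (∃ w : V, G.Adj v w ∧ C v (ℓ+1) / ϑ ≤ t v ℓ - t w ℓ - 4*(s:ℝ)*κ) ∨
      C v (ℓ+1) ≤ 0)
    (hFC : ∀ (s : ℕ), 1 ≤ s → ∀ (v : V) (ℓ : ℕ),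
      (∃ w : V, G.Adj v w ∧ t v ℓ - t w ℓ + (4*(s:ℝ)-2)*κ + κ ≤ C v (ℓ+1)) ∨
      (∀ w : V, G.Adj v w → t v ℓ - t w ℓ - (4*(s:ℝ)-2)*κ + κ ≤ C v (ℓ+1)) ∨
      κ ≤ C v (ℓ+1))
    (hJC : ∀ (v : V) (ℓ : ℕ),
      (κ < C v (ℓ+1)/ϑ ∧ ∀ w : V, G.Adj v w → C v (ℓ+1)/ϑ ≤ t v ℓ - t w ℓ - κ) ∨
      (C v (ℓ+1) < 0 ∧ ∀ w : V, G.Adj v w → t v ℓ - t w ℓ + κ ≤ C v (ℓ+1)) ∨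
      (0 ≤ C v (ℓ+1)/ϑ ∧ C v (ℓ+1)/ϑ ≤ κ))
    (hL0 : ∀ v w : V, G.Adj v w → |t v 0 - t w 0| ≤ 4*κ) :
    ∀ (ℓ : ℕ) (v w : V), G.Adj v w →
      |t v ℓ - t w ℓ| ≤ 4*κ*(2 + Real.logb 2 (D:ℝ)) := by
  have hdrift : 0 < (1 - 1 / ϑ) * (Λ - d) :=
    mul_pos (sub_pos.2 ((div_lt_one (by linarith)).2 hϑ)) (sub_pos.2 hΛ)
  exact stmt12_general (by linarith) (by linarith) hκ hconn hdiam hDRIFT hSC hFC hJC hL0
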